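/- arXiv:2201.13270 — 3 statements merged into one kernel-verified Lean document; each statement's English description precedes it below -/
import Mathlib

section
/- Let K be a number field, p a prime with p > 3, and (a,b,c) ∈ O_K³ a nontrivial primitive solution of a^p + b^p = c^3 with Frey curve E = E_{a,b,c}. Let q be a nonzero prime ideal of O_K not dividing 3 such that v_q(Δ_E) > 0. Then q divides exactly one of the ideals aO_K and bO_K, q does not divide c O_K, v_q(c₄(E)) = 0, and v_q(Δ_E) = p·v_q(a) + 3p·v_q(b); in particular p divides v_q(Δ_E). -/
/-!
The proof rests on two factorisations valid on any solution of `aᵖ + bᵖ = c³`: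
`Δ_E = 27 aᵖ b³ᵖ` and `c₄(E) = 9 c (c³ + 8 aᵖ) = 9 c (9 c³ - 8 bᵖ)`.
Since `q ∤ 3`, positivity of `v_q(Δ_E)` forces `q ∣ a` or `q ∣ b`, and pairwise coprimality
excludes both at once as well as `q ∣ c`.  Reducing the first (if `q ∣ a`) or the second
(if `q ∣ b`) form of `c₄` modulo `q` leaves a power of `3` times `c⁴`, so `q ∤ c₄`.
The formula for `v_q(Δ_E)` is additivity of `v_q` applied to the factorisation of `Δ_E`.
-/

open NumberField

/-- The Frey curve `Y² + 3cXY + bᵖY = X³` associated to a solution of `aᵖ + bᵖ = c³`. -/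
def FreyCurve {R : Type*} [CommRing R] (a b c : R) (p : ℕ) : WeierstrassCurve R :=
  { a₁ := 3 * c, a₂ := 0, a₃ := b ^ p, a₄ := 0, a₆ := 0 }

/-- The `q`-adic valuation of a nonzero element `x` of the ring of integers of a number field:
the multiplicity of the prime ideal `q` in the principal ideal generated by `x`. -/
noncomputable def idealVal {K : Type*} [Field K] [NumberField K]
    (q : Ideal (𝓞 K)) (x : 𝓞 K) : ℕ :=
  multiplicity q (Ideal.span {x})

theorem FreyCurve.disc_eq {R : Type*} [CommRing R] (a b c : R) (p : ℕ)
    (h : a ^ p + b ^ p = c ^ 3) : (FreyCurve a b c p).Δ = 3 ^ 3 * (a ^ p * (b ^ p) ^ 3) := by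
  simp only [FreyCurve, WeierstrassCurve.Δ, WeierstrassCurve.b₂, WeierstrassCurve.b₄,
    WeierstrassCurve.b₆, WeierstrassCurve.b₈]
  linear_combination (-27 * (b ^ p) ^ 3) * h

theorem FreyCurve.c₄_eq {R : Type*} [CommRing R] (a b c : R) (p : ℕ) :
    (FreyCurve a b c p).c₄ = 3 ^ 2 * c * (3 ^ 2 * c ^ 3 - 8 * b ^ p) := by
  simp only [FreyCurve, WeierstrassCurve.c₄, WeierstrassCurve.b₂, WeierstrassCurve.b₄]
  ring

section idealVal

variable {K : Type*} [Field K] [NumberField K] {q : Ideal (𝓞 K)}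

theorem dvd_span_iff_mem {x : 𝓞 K} : q ∣ Ideal.span {x} ↔ x ∈ q := by
  rw [Ideal.dvd_span_singleton]

theorem idealVal_eq_zero {x : 𝓞 K} (hx : x ∉ q) : idealVal q x = 0 :=
  multiplicity_eq_zero.mpr (mt dvd_span_iff_mem.mp hx)

/-- The nonvanishing hypothesis guarantees that the multiplicities are finite, so that no default
value of `multiplicity` intervenes. -/
theorem idealVal_mul (hq : Prime q) {x y : 𝓞 K} (hxy : x * y ≠ 0) :
    idealVal q (x * y) = idealVal q x + idealVal q y := by
  have hfin : FiniteMultiplicity q (Ideal.span {x} * Ideal.span {y}) := by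
    rw [Ideal.span_singleton_mul_span_singleton]
    apply FiniteMultiplicity.of_prime_left hq
    simpa using hxy
  unfold idealVal
  rw [← Ideal.span_singleton_mul_span_singleton]
  exact multiplicity_mul hq hfin

theorem idealVal_pow (hq : Prime q) {x : 𝓞 K} (hx : x ≠ 0) (n : ℕ) :
    idealVal q (x ^ n) = n * idealVal q x := by
  have hfin : FiniteMultiplicity q (Ideal.span {x}) := by
    apply FiniteMultiplicity.of_prime_left hq
    simpa using hx
  unfold idealVal
  rw [← Ideal.span_singleton_pow]
  exact hfin.multiplicity_pow hq

end idealVal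

/-- Two coprime elements do not both lie in a prime ideal. -/
theorem notMem_of_isCoprime {R : Type*} [CommRing R] {q : Ideal R} (hq : q.IsPrime) {x y : R}
    (hxy : IsCoprime x y) (hx : x ∈ q) : y ∉ q := by
  intro hy
  obtain ⟨u, v, huv⟩ := hxy
  apply hq.one_notMem
  rw [← huv]
  exact q.add_mem (q.mul_mem_left u hx) (q.mul_mem_left v hy)

/-- Let `p > 3` be a prime and `(a,b,c)` a nontrivial primitive solution of `aᵖ + bᵖ = c³` in
the ring of integers of a number field `K`, with Frey curve `E = E_{a,b,c}`.  If `q` is a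
nonzero prime ideal of `𝓞 K` not dividing `3` with `v_q(Δ_E) > 0`, then `q` divides exactly
one of `a𝓞 K` and `b𝓞 K`, `q` does not divide `c𝓞 K`, `v_q(c₄(E)) = 0`, and
`v_q(Δ_E) = p·v_q(a) + 3p·v_q(b)`; in particular `p ∣ v_q(Δ_E)`. -/
theorem frey_valuation_away_from_three {K : Type*} [Field K] [NumberField K]
    (p : ℕ) (hp : p.Prime) (hp3 : 3 < p) (a b c : 𝓞 K)
    (habc : a * b * c ≠ 0)
    (hab : IsCoprime a b) (hac : IsCoprime a c) (hbc : IsCoprime b c)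
    (h : a ^ p + b ^ p = c ^ 3)
    (q : Ideal (𝓞 K)) (hq : q.IsPrime) (hq0 : q ≠ ⊥)
    (hq3 : ¬ q ∣ Ideal.span {(3 : 𝓞 K)})
    (hΔ : 0 < idealVal q (FreyCurve a b c p).Δ) :
    ((q ∣ Ideal.span {a} ∧ ¬ q ∣ Ideal.span {b}) ∨
      (¬ q ∣ Ideal.span {a} ∧ q ∣ Ideal.span {b})) ∧
    ¬ q ∣ Ideal.span {c} ∧
    idealVal q (FreyCurve a b c p).c₄ = 0 ∧
    idealVal q (FreyCurve a b c p).Δ = p * idealVal q a + 3 * p * idealVal q b ∧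
    p ∣ idealVal q (FreyCurve a b c p).Δ := by
  have hqp : Prime q := Ideal.prime_of_isPrime hq0 hq
  obtain ⟨⟨ha0, hb0⟩, -⟩ : (a ≠ 0 ∧ b ≠ 0) ∧ c ≠ 0 := by simpa [mul_ne_zero_iff] using habc
  have hp0 : p ≠ 0 := hp.ne_zero
  simp only [dvd_span_iff_mem] at hq3 ⊢
  have hpow3 : ∀ n, (3 : 𝓞 K) ^ n ∉ q := fun n hn => hq3 (hq.mem_of_pow_mem n hn)
  have hΔeq := FreyCurve.disc_eq a b c p h
  have h3 : (3 : 𝓞 K) ≠ 0 := by norm_num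
  have hval : idealVal q (FreyCurve a b c p).Δ = p * idealVal q a + 3 * p * idealVal q b := by
    have hprod : a ^ p * (b ^ p) ^ 3 ≠ 0 := by positivity
    rw [hΔeq, idealVal_mul hqp (mul_ne_zero (pow_ne_zero 3 h3) hprod), idealVal_mul hqp hprod,
      idealVal_eq_zero (hpow3 3), idealVal_pow hqp ha0, idealVal_pow hqp (pow_ne_zero p hb0),
      idealVal_pow hqp hb0]
    ring
  have hor : a ∈ q ∨ b ∈ q := by
    by_contra! hno
    rw [hval, idealVal_eq_zero hno.1, idealVal_eq_zero hno.2] at hΔ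
    simp at hΔ
  have hcq : c ∉ q := hor.elim (notMem_of_isCoprime hq hac) (notMem_of_isCoprime hq hbc)
  have hc₄ : (FreyCurve a b c p).c₄ ∉ q := by
    rw [FreyCurve.c₄_eq]
    refine hq.mul_notMem (hq.mul_notMem (hpow3 2) hcq) fun hmem => ?_
    rcases hor with ha | hb
    · -- Modulo `q`, `bᵖ ≡ c³`, so the last factor of `c₄` reduces to `c³`.
      have hap : a ^ p ∈ q := q.pow_mem_of_mem ha p hp.pos
      refine hcq (hq.mem_of_pow_mem 3 ?_)
      have heq : c ^ 3 = (3 ^ 2 * c ^ 3 - 8 * b ^ p) - 8 * a ^ p := by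
        linear_combination 8 * h
      rw [heq]
      exact q.sub_mem hmem (q.mul_mem_left 8 hap)
    · have hbp : b ^ p ∈ q := q.pow_mem_of_mem hb p hp.pos
      have hmem' : 3 ^ 2 * c ^ 3 ∈ q := by
        have hadd := q.add_mem hmem (q.mul_mem_left 8 hbp)
        rwa [sub_add_cancel] at hadd
      exact hq.mul_notMem (hpow3 2) (fun hc => hcq (hq.mem_of_pow_mem 3 hc)) hmem'
  refine ⟨?_, hcq, idealVal_eq_zero hc₄, hval, ?_⟩
  · rcases hor with ha | hb
    · exact Or.inl ⟨ha, notMem_of_isCoprime hq hab ha⟩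
    · exact Or.inr ⟨notMem_of_isCoprime hq hab.symm hb, hb⟩
  · rw [hval]
    exact ⟨idealVal q a + 3 * idealVal q b, by ring⟩
end

section
/- Let p ≥ 5 be a prime and let G be a subgroup of GL₂(F_p) whose order is divisible by p. Then either G acts reducibly on F_p² (i.e., there is a one-dimensional F_p-subspace of F_p² stable under every element of G), or G contains SL₂(F_p). -/
/-!
Cauchy's theorem gives `g ∈ G` of order `p`. Since `(g - 1) ^ p = g ^ p - 1 = 0` in
characteristic `p`, the matrix `g - 1` is singular, so `g` fixes a nonzero vector `v`. If the line
spanned by `v` is not `G`-stable, some `h ∈ G` has `v`, `h v` linearly independent. In the basis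
`(v, h v)` the elements `g` and `h g h⁻¹` of order `p` fix the first and the second basis vector
respectively; as an element with `g ^ p = 1` has determinant `1`, they are nontrivial upper and
lower unipotent matrices. Their powers are all upper and lower transvections
(`mem_of_eq_one_add_smul`), and these generate `SL₂` (`mem_of_det_eq_one`). Because `SL₂` is normal
in `GL₂`, the conclusion is independent of the basis.
-/

/-- The powers of the unipotent element `1 + N` run through the whole group `{1 + t N}`. -/
lemma mem_of_eq_one_add_smul {p : ℕ} [Fact p.Prime] (H : Subgroup (GL (Fin 2) (ZMod p)))
    {k : GL (Fin 2) (ZMod p)} (hk : k ∈ H) {N : Matrix (Fin 2) (Fin 2) (ZMod p)}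
    (hkN : (k : Matrix (Fin 2) (Fin 2) (ZMod p)) = 1 + N) (hN : N * N = 0)
    (t : ZMod p) (k' : GL (Fin 2) (ZMod p))
    (hk' : (k' : Matrix (Fin 2) (Fin 2) (ZMod p)) = 1 + t • N) : k' ∈ H := by
  have hpow : ∀ n : ℕ, (k : Matrix (Fin 2) (Fin 2) (ZMod p)) ^ n = 1 + (n : ZMod p) • N := by
    intro n
    induction n with
    | zero => simp
    | succ n ih =>
      rw [pow_succ, ih, hkN]
      simp only [mul_add, add_mul, mul_one, one_mul, smul_mul_assoc, hN, smul_zero, add_zero,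
        Nat.cast_succ, add_smul, one_smul]
      abel
  have : k' = k ^ t.val := by
    apply Units.ext
    rw [Units.val_pow_eq_pow_val, hpow, hk', ZMod.natCast_zmod_val]
  rw [this]
  exact H.pow_mem hk _

/-- Upper and lower transvections generate `SL₂`. -/
lemma mem_of_det_eq_one {F : Type*} [Field F] (H : Subgroup (GL (Fin 2) F))
    (hU : ∀ (t : F) (k : GL (Fin 2) F), (k : Matrix (Fin 2) (Fin 2) F) = !![1, t; 0, 1] → k ∈ H)
    (hL : ∀ (t : F) (k : GL (Fin 2) F), (k : Matrix (Fin 2) (Fin 2) F) = !![1, 0; t, 1] → k ∈ H)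
    (k : GL (Fin 2) F) (hk : (k : Matrix (Fin 2) (Fin 2) F).det = 1) : k ∈ H := by
  let U : F → GL (Fin 2) F := fun t =>
    Matrix.GeneralLinearGroup.mkOfDetNeZero !![1, t; 0, 1] (by simp [Matrix.det_fin_two])
  let L : F → GL (Fin 2) F := fun t =>
    Matrix.GeneralLinearGroup.mkOfDetNeZero !![1, 0; t, 1] (by simp [Matrix.det_fin_two])
  have hUv : ∀ t, (U t : Matrix (Fin 2) (Fin 2) F) = !![1, t; 0, 1] := fun _ => rfl
  have hLv : ∀ t, (L t : Matrix (Fin 2) (Fin 2) F) = !![1, 0; t, 1] := fun _ => rfl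
  have hUm : ∀ t, U t ∈ H := fun t => hU t _ (hUv t)
  have hLm : ∀ t, L t ∈ H := fun t => hL t _ (hLv t)
  have key : ∀ m : GL (Fin 2) F, (m : Matrix (Fin 2) (Fin 2) F).det = 1 → m 1 0 ≠ 0 → m ∈ H := by
    intro m hm hc
    have : m = U ((m 0 0 - 1) / m 1 0) * L (m 1 0) * U ((m 1 1 - 1) / m 1 0) := by
      apply Units.ext
      rw [Units.val_mul, Units.val_mul, hUv, hLv, hUv]
      rw [Matrix.det_fin_two] at hm
      ext i j
      fin_cases i <;> fin_cases j <;> simp [Matrix.mul_apply, Fin.sum_univ_two] <;> field_simp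
      · ring
      · linear_combination -hm
      · ring
    rw [this]
    exact H.mul_mem (H.mul_mem (hUm _) (hLm _)) (hUm _)
  by_cases hc : k 1 0 = 0
  · -- A vanishing lower left entry becomes nonzero after adding the first row to the second.
    have h00 : k 0 0 ≠ 0 := by
      intro h
      rw [Matrix.det_fin_two, hc, h] at hk
      simp at hk
    have h1 : L 1 * k ∈ H := by
      apply key
      · rw [Units.val_mul, Matrix.det_mul, hk, hLv]
        simp [Matrix.det_fin_two]
      · rw [Units.val_mul, hLv]
        simpa [Matrix.mul_apply, Fin.sum_univ_two, hc] using h00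
    exact (H.mul_mem_cancel_left (hLm 1)).1 h1
  · exact key k hk hc

lemma det_eq_one_of_pow_eq_one {p : ℕ} [Fact p.Prime] (k : GL (Fin 2) (ZMod p))
    (hk : k ^ p = 1) : (k : Matrix (Fin 2) (Fin 2) (ZMod p)).det = 1 := by
  have h := congrArg (fun x : GL (Fin 2) (ZMod p) =>
    (x : Matrix (Fin 2) (Fin 2) (ZMod p)).det) hk
  simpa [Matrix.det_pow] using h

lemma exists_fixed_vector {p : ℕ} [Fact p.Prime] (g : GL (Fin 2) (ZMod p)) (hg : g ^ p = 1) :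
    ∃ v : Fin 2 → ZMod p, v ≠ 0 ∧ (g : Matrix (Fin 2) (Fin 2) (ZMod p)).mulVec v = v := by
  have h1 : ((g : Matrix (Fin 2) (Fin 2) (ZMod p)) - 1) ^ p = 0 := by
    rw [sub_pow_char_of_commute _ (Commute.one_right _), ← Units.val_pow_eq_pow_val, hg]
    simp
  have h2 : ((g : Matrix (Fin 2) (Fin 2) (ZMod p)) - 1).det = 0 := by
    have h := congrArg Matrix.det h1
    rw [Matrix.det_pow, Matrix.det_zero] at h
    exact eq_zero_of_pow_eq_zero h
  obtain ⟨v, hv, hv0⟩ := Matrix.exists_mulVec_eq_zero_iff.2 h2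
  refine ⟨v, hv, ?_⟩
  rw [Matrix.sub_mulVec, Matrix.one_mulVec] at hv0
  exact sub_eq_zero.1 hv0

/-- If `g` fixes column `j` of `P`, then column `j` of `P⁻¹ g P` is that of the identity. -/
lemma conj_col {p : ℕ} (P g : GL (Fin 2) (ZMod p)) (j : Fin 2)
    (h : (g : Matrix (Fin 2) (Fin 2) (ZMod p)).mulVec (fun i => P i j) = fun i => P i j)
    (i : Fin 2) : (P⁻¹ * g * P) i j = (1 : Matrix (Fin 2) (Fin 2) (ZMod p)) i j := by
  have hc : ∀ i, ((g * P : GL (Fin 2) (ZMod p)) : Matrix (Fin 2) (Fin 2) (ZMod p)) i j = P i j :=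
    fun i => congrFun h i
  have h1 : ((P⁻¹ * P : GL (Fin 2) (ZMod p)) : Matrix (Fin 2) (Fin 2) (ZMod p)) i j
      = (1 : Matrix (Fin 2) (Fin 2) (ZMod p)) i j := by
    rw [inv_mul_cancel]
    rfl
  rw [← h1, mul_assoc, Units.val_mul, Units.val_mul P⁻¹ P, Matrix.mul_apply, Matrix.mul_apply]
  simp only [hc]

/-- Let `p ≥ 5` be a prime and `G` a subgroup of `GL₂(𝔽_p)` whose order is divisible by `p`.
Then either `G` acts reducibly on `𝔽_p²` (there is a one-dimensional subspace of `𝔽_p²`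
stable under every element of `G`), or `G` contains `SL₂(𝔽_p)`. -/
theorem subgroup_GL2_order_divisible_by_p (p : ℕ) (hp : p.Prime) (hp5 : 5 ≤ p)
    (G : Subgroup (GL (Fin 2) (ZMod p))) (hdvd : p ∣ Nat.card G) :
    (∃ V : Submodule (ZMod p) (Fin 2 → ZMod p), Module.finrank (ZMod p) V = 1 ∧
      ∀ g ∈ G, ∀ v ∈ V, Matrix.mulVec (g : Matrix (Fin 2) (Fin 2) (ZMod p)) v ∈ V) ∨
    (∀ A : Matrix.SpecialLinearGroup (Fin 2) (ZMod p),
      Matrix.SpecialLinearGroup.toGL A ∈ G) := by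
  have : Fact p.Prime := ⟨hp⟩
  obtain ⟨⟨g, hgG⟩, hord⟩ := exists_prime_orderOf_dvd_card' (G := G) p hdvd
  rw [Subgroup.orderOf_mk] at hord
  have hgp : g ^ p = 1 := orderOf_dvd_iff_pow_eq_one.1 hord.dvd
  have hg1 : g ≠ 1 := by
    rintro rfl
    rw [orderOf_one] at hord
    omega
  obtain ⟨v, hv0, hgv⟩ := exists_fixed_vector g hgp
  by_cases hred : ∀ h ∈ G,
      (h : Matrix (Fin 2) (Fin 2) (ZMod p)).mulVec v ∈ Submodule.span (ZMod p) {v}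
  · left
    refine ⟨Submodule.span (ZMod p) {v}, finrank_span_singleton hv0, ?_⟩
    intro h hh w hw
    obtain ⟨c, rfl⟩ := Submodule.mem_span_singleton.1 hw
    rw [Matrix.mulVec_smul]
    exact Submodule.smul_mem _ _ (hred h hh)
  right
  push Not at hred
  obtain ⟨h, hhG, hw⟩ := hred
  set w := (h : Matrix (Fin 2) (Fin 2) (ZMod p)).mulVec v with hwdef
  have hdet : (!![v 0, w 0; v 1, w 1]).det ≠ 0 := by
    intro hd
    rw [Matrix.det_fin_two_of] at hd
    apply hw
    rw [Submodule.mem_span_singleton]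
    by_cases h0 : v 0 = 0
    · have h1 : v 1 ≠ 0 := by
        intro h1
        apply hv0
        ext i
        fin_cases i <;> simp [h0, h1]
      refine ⟨w 1 / v 1, ?_⟩
      ext i
      fin_cases i <;> simp <;> field_simp
      linear_combination hd
    · refine ⟨w 0 / v 0, ?_⟩
      ext i
      fin_cases i <;> simp <;> field_simp
      linear_combination -hd
  let P : GL (Fin 2) (ZMod p) := Matrix.GeneralLinearGroup.mkOfDetNeZero _ hdet
  have hP0 : (fun i => P i 0) = v := by
    ext i
    fin_cases i <;> rfl
  have hP1 : (fun i => P i 1) = w := by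
    ext i
    fin_cases i <;> rfl
  -- `G` written in the basis `(v, w)`.
  let H : Subgroup (GL (Fin 2) (ZMod p)) := G.comap (MulAut.conj P).toMonoidHom
  have hH : ∀ x, P⁻¹ * x * P ∈ H ↔ x ∈ G := by
    intro x
    have : P * (P⁻¹ * x * P) * P⁻¹ = x := by group
    rw [Subgroup.mem_comap, MulEquiv.coe_toMonoidHom, MulAut.conj_apply, this]
  have hpow : ∀ x : GL (Fin 2) (ZMod p), x ^ p = 1 → (P⁻¹ * x * P) ^ p = 1 := by
    intro x hx
    have := conj_pow (i := p) (a := P⁻¹) (b := x)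
    rw [inv_inv] at this
    rw [this, hx]
    group
  have hne : ∀ x : GL (Fin 2) (ZMod p), x ≠ 1 → P⁻¹ * x * P ≠ 1 := by
    intro x hx h1
    apply hx
    have : x = P * (P⁻¹ * x * P) * P⁻¹ := by group
    rw [this, h1]
    group
  let g' := h * g * h⁻¹
  have hg'G : g' ∈ G := G.mul_mem (G.mul_mem hhG hgG) (G.inv_mem hhG)
  have hg'p : g' ^ p = 1 := by
    simp [g', conj_pow, hgp]
  have hg'1 : g' ≠ 1 := by
    simpa [g'] using hg1
  have hg'w : (g' : Matrix (Fin 2) (Fin 2) (ZMod p)).mulVec w = w := by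
    have e : g' * h = h * g := by simp [g']
    rw [hwdef, Matrix.mulVec_mulVec, ← Units.val_mul, e, Units.val_mul, ← Matrix.mulVec_mulVec, hgv]
  have hU : ∀ (t : ZMod p) (k : GL (Fin 2) (ZMod p)),
      (k : Matrix (Fin 2) (Fin 2) (ZMod p)) = !![1, t; 0, 1] → k ∈ H := by
    intro t k hk
    have hcol := conj_col P g 0 (by rw [hP0]; exact hgv)
    have hd := det_eq_one_of_pow_eq_one _ (hpow g hgp)
    have hn := hne g hg1
    have hm := (hH g).2 hgG
    generalize P⁻¹ * g * P = m at hcol hd hn hm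
    have c0 : m 0 0 = 1 := by simpa using hcol 0
    have c1 : m 1 0 = 0 := by simpa using hcol 1
    rw [Matrix.det_fin_two, c0, c1, one_mul, mul_zero, sub_zero] at hd
    have hx : m 0 1 ≠ 0 := by
      intro hx
      apply hn
      ext i j
      fin_cases i <;> fin_cases j <;> simp [c0, c1, hd, hx]
    refine mem_of_eq_one_add_smul H hm (N := !![0, m 0 1; 0, 0]) ?_ ?_ (t / m 0 1) k ?_
    · ext i j
      fin_cases i <;> fin_cases j <;> simp [c0, c1, hd]
    · ext i j
      fin_cases i <;> fin_cases j <;> simp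
    · rw [hk]
      ext i j
      fin_cases i <;> fin_cases j <;> simp [hx]
  have hL : ∀ (t : ZMod p) (k : GL (Fin 2) (ZMod p)),
      (k : Matrix (Fin 2) (Fin 2) (ZMod p)) = !![1, 0; t, 1] → k ∈ H := by
    intro t k hk
    have hcol := conj_col P g' 1 (by rw [hP1]; exact hg'w)
    have hd := det_eq_one_of_pow_eq_one _ (hpow g' hg'p)
    have hn := hne g' hg'1
    have hm := (hH g').2 hg'G
    generalize P⁻¹ * g' * P = m at hcol hd hn hm
    have c0 : m 0 1 = 0 := by simpa using hcol 0
    have c1 : m 1 1 = 1 := by simpa using hcol 1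
    rw [Matrix.det_fin_two, c0, c1, mul_one, zero_mul, sub_zero] at hd
    have hx : m 1 0 ≠ 0 := by
      intro hx
      apply hn
      ext i j
      fin_cases i <;> fin_cases j <;> simp [c0, c1, hd, hx]
    refine mem_of_eq_one_add_smul H hm (N := !![0, 0; m 1 0, 0]) ?_ ?_ (t / m 1 0) k ?_
    · ext i j
      fin_cases i <;> fin_cases j <;> simp [c0, c1, hd]
    · ext i j
      fin_cases i <;> fin_cases j <;> simp
    · rw [hk]
      ext i j
      fin_cases i <;> fin_cases j <;> simp [hx]
  intro A
  rw [← hH]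
  apply mem_of_det_eq_one H hU hL
  have hA : ((Matrix.SpecialLinearGroup.toGL A : GL (Fin 2) (ZMod p)) :
      Matrix (Fin 2) (Fin 2) (ZMod p)).det = 1 := A.2
  have hPP : ((P⁻¹ : GL (Fin 2) (ZMod p)) : Matrix (Fin 2) (Fin 2) (ZMod p)).det *
      (P : Matrix (Fin 2) (Fin 2) (ZMod p)).det = 1 := by
    rw [← Matrix.det_mul, ← Units.val_mul, inv_mul_cancel]
    simp
  rw [Units.val_mul, Units.val_mul, Matrix.det_mul, Matrix.det_mul, hA, mul_one, hPP]
end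

section
/- Define polynomials f₁(x) = x² − 2 and f_n(x) = f_{n−1}(x)² − 2 for n ≥ 2, and let θ_n be a root of f_n(x). Then for every n ≥ 1: f_n is irreducible over ℚ; the number field K_n = ℚ(θ_n) equals ℚ(ζ + ζ⁻¹) for ζ a primitive 2^{n+2}-th root of unity (the maximal totally real subfield of the 2^{n+2}-th cyclotomic field); K_n is a totally real number field of degree 2^n over ℚ; and 2 is totally ramified in K_n, i.e., 2O_{K_n} = 𝔭^{2^n} for a single prime ideal 𝔭 of O_{K_n}. -/
/-!
Over `ℤ` the polynomial `f_n` is monic of degree `2 ^ n`, congruent to `X ^ 2 ^ n` modulo `2`, with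
constant term `±2`. Hence it is irreducible by Eisenstein's criterion (`towerPoly_irreducible`), and
`[ℚ(θ) : ℚ] = 2 ^ n`.

The identity `f_n(y + y⁻¹) = y ^ 2 ^ n + y ^ (-2 ^ n)` shows that the roots of `f_n` are exactly of
the form `y + y⁻¹` with `y` a primitive `2 ^ (n + 2)`-th root of unity
(`exists_primitive_of_root`). Since any two such roots of unity are powers of each other and
`y ^ k + y ^ (-k)` is a polynomial in `y + y⁻¹`, all the fields `ℚ(y + y⁻¹)` coincide. As
`|y| = 1`, all roots are real, so every complex embedding of `ℚ(θ)` is real.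

Finally, `θ` is an algebraic integer of norm `±2`, so `(θ)` is a prime ideal, and the congruence
modulo `2` gives `θ ^ 2 ^ n = 2 u` with `u` integral. Comparing norms, `u` is a unit, so
`(2) = (θ) ^ 2 ^ n` (`span_two_eq_pow`).
-/

open Polynomial NumberField IntermediateField

/-- The tower of polynomials `f₁ = X² − 2`, `f_{n+1} = f_n² − 2` (with the junk value
`f₀ = X`). -/
noncomputable def towerPoly : ℕ → ℚ[X]
  | 0 => X
  | 1 => X ^ 2 - C 2
  | (n + 1) => (towerPoly n) ^ 2 - C 2

/-- The integral model of `towerPoly`: the same recursion over `ℤ`, started at `X`. -/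
noncomputable def towerInt : ℕ → ℤ[X]
  | 0 => X
  | (n + 1) => (towerInt n) ^ 2 - C 2

lemma towerPoly_succ (n : ℕ) : towerPoly (n + 1) = towerPoly n ^ 2 - C 2 := by
  cases n <;> simp [towerPoly]

lemma towerInt_map (n : ℕ) : (towerInt n).map (algebraMap ℤ ℚ) = towerPoly n := by
  induction n with
  | zero => simp [towerInt, towerPoly]
  | succ n ih =>
    simp only [towerInt, towerPoly_succ, ← ih, Polynomial.map_sub, Polynomial.map_pow, map_ofNat,
      Polynomial.map_ofNat]

lemma towerInt_monic_natDegree (n : ℕ) :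
    (towerInt n).Monic ∧ (towerInt n).natDegree = 2 ^ n := by
  induction n with
  | zero => simp [towerInt, monic_X]
  | succ n ih =>
    obtain ⟨hm, hd⟩ := ih
    have hd2 : (towerInt n ^ 2).natDegree = 2 ^ (n + 1) := by
      rw [hm.natDegree_pow, hd, pow_succ, mul_comm]
    refine ⟨?_, ?_⟩
    · refine (hm.pow 2).sub_of_left ?_
      rw [degree_eq_natDegree (hm.pow 2).ne_zero, hd2]
      refine degree_C_le.trans_lt ?_
      exact_mod_cast Nat.two_pow_pos _
    · rw [towerInt, natDegree_sub_C, hd2]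

/-- Modulo `2` the polynomial is a pure power of `X`: squaring preserves such a congruence. -/
lemma towerInt_eq_X_pow_add (n : ℕ) : ∃ h : ℤ[X], towerInt n = X ^ (2 ^ n) + C 2 * h := by
  induction n with
  | zero => exact ⟨0, by simp [towerInt]⟩
  | succ n ih =>
    obtain ⟨h, hh⟩ := ih
    refine ⟨2 * X ^ (2 ^ n) * h + 2 * h ^ 2 - 1, ?_⟩
    rw [towerInt, hh, pow_succ 2 n, pow_mul]
    have : (C 2 : ℤ[X]) = 2 := rfl
    rw [this]
    ring

lemma towerInt_coeff_zero (n : ℕ) (hn : 1 ≤ n) :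
    (towerInt n).coeff 0 = 2 ∨ (towerInt n).coeff 0 = -2 := by
  induction n, hn using Nat.le_induction with
  | base => simp [towerInt, coeff_zero_eq_eval_zero]
  | succ n hn ih =>
    left
    simp only [coeff_zero_eq_eval_zero] at ih
    rcases ih with h | h <;> simp [towerInt, coeff_zero_eq_eval_zero, h]

/-- Eisenstein's criterion at `2`. -/
lemma towerInt_irreducible (n : ℕ) (hn : 1 ≤ n) : Irreducible (towerInt n) := by
  obtain ⟨hm, hd⟩ := towerInt_monic_natDegree n
  obtain ⟨h, hh⟩ := towerInt_eq_X_pow_add n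
  have hp : (Ideal.span {(2 : ℤ)}).IsPrime :=
    (Ideal.span_singleton_prime two_ne_zero).2 Int.prime_two
  refine (hm.isEisensteinAt_of_mem_of_notMem hp.ne_top ?_ ?_).irreducible hp hm.isPrimitive ?_
  · intro k hk
    rw [hd] at hk
    rw [Ideal.mem_span_singleton, hh, coeff_add, coeff_X_pow, if_neg hk.ne, coeff_C_mul, zero_add]
    exact dvd_mul_right _ _
  · rw [Ideal.span_singleton_pow, Ideal.mem_span_singleton]
    rcases towerInt_coeff_zero n hn with h | h <;> rw [h] <;> norm_num
  · rw [hd]; positivity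

lemma towerPoly_irreducible (n : ℕ) (hn : 1 ≤ n) : Irreducible (towerPoly n) := by
  rw [← towerInt_map]
  exact (towerInt_monic_natDegree n).1.irreducible_iff_irreducible_map_fraction_map.1
    (towerInt_irreducible n hn)

/-- The polynomials are rescaled Chebyshev polynomials. -/
lemma aeval_towerPoly_add_inv (n : ℕ) (y : ℂ) (hy : y ≠ 0) :
    aeval (y + y⁻¹) (towerPoly n) = y ^ (2 ^ n) + (y ^ (2 ^ n))⁻¹ := by
  induction n with
  | zero => simp [towerPoly]
  | succ n ih =>
    rw [towerPoly_succ, map_sub, map_pow, ih, pow_succ 2 n, pow_mul]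
    have : y ^ 2 ^ n ≠ 0 := pow_ne_zero _ hy
    simp only [map_ofNat]
    field_simp
    ring

/-- Every root has the form `y + y⁻¹` (solve a quadratic), and `f_n(y + y⁻¹) = 0` says
`y ^ 2 ^ (n + 1) = -1`. -/
lemma exists_primitive_of_root (n : ℕ) (θ : ℂ) (hθ : aeval θ (towerPoly n) = 0) :
    ∃ y : ℂ, IsPrimitiveRoot y (2 ^ (n + 2)) ∧ θ = y + y⁻¹ := by
  obtain ⟨s, hs⟩ := IsAlgClosed.exists_pow_nat_eq (θ ^ 2 - 4) (n := 2) (by norm_num)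
  have hq : ((θ + s) / 2) ^ 2 + 1 = θ * ((θ + s) / 2) := by linear_combination hs / 4
  generalize (θ + s) / 2 = y at hq
  have hy : y ≠ 0 := by rintro rfl; simp at hq
  have hθy : θ = y + y⁻¹ := by field_simp; linear_combination -hq
  refine ⟨y, ?_, hθy⟩
  rw [hθy, aeval_towerPoly_add_inv n y hy] at hθ
  have h0 : y ^ 2 ^ n ≠ 0 := pow_ne_zero _ hy
  have h1 : y ^ 2 ^ (n + 1) = -1 := by
    rw [pow_succ 2 n, pow_mul]
    field_simp at hθ
    linear_combination hθ
  have : orderOf y = 2 ^ (n + 1 + 1) := by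
    apply orderOf_eq_prime_pow
    · rw [h1]; norm_num
    · rw [pow_succ 2 (n + 1), pow_mul, h1]; norm_num
  rw [show n + 2 = n + 1 + 1 from rfl, ← this]
  exact IsPrimitiveRoot.orderOf y

lemma pow_add_inv_mem (y : ℂ) (hy : y ≠ 0) (k : ℕ) : y ^ k + (y ^ k)⁻¹ ∈ ℚ⟮y + y⁻¹⟯ := by
  have hg := mem_adjoin_simple_self ℚ (y + y⁻¹)
  induction k using Nat.twoStepInduction with
  | zero => simpa using add_mem (one_mem ℚ⟮y + y⁻¹⟯) (one_mem _)
  | one => simpa using hg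
  | more k h0 h1 =>
    have : y ^ (k + 2) + (y ^ (k + 2))⁻¹ =
        (y + y⁻¹) * (y ^ (k + 1) + (y ^ (k + 1))⁻¹) - (y ^ k + (y ^ k)⁻¹) := by
      field_simp
      ring
    rw [this]
    exact sub_mem (mul_mem hg h1) h0

lemma adjoin_le_of_primitive {m : ℕ} [NeZero m] {a b : ℂ} (ha : IsPrimitiveRoot a m)
    (hb : IsPrimitiveRoot b m) : ℚ⟮a + a⁻¹⟯ ≤ ℚ⟮b + b⁻¹⟯ := by
  obtain ⟨k, -, rfl⟩ := hb.eq_pow_of_pow_eq_one ha.pow_eq_one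
  rw [adjoin_simple_le_iff]
  exact pow_add_inv_mem b (hb.ne_zero (NeZero.ne m)) k

lemma conj_eq_of_root (n : ℕ) (θ : ℂ) (hθ : aeval θ (towerPoly n) = 0) :
    (starRingEnd ℂ) θ = θ := by
  obtain ⟨y, hy, rfl⟩ := exists_primitive_of_root n θ hθ
  have h1 : ‖y‖ = 1 := hy.norm'_eq_one (by positivity)
  have h2 : (starRingEnd ℂ) y = y⁻¹ := by
    rw [Complex.inv_def, Complex.normSq_eq_norm_sq, h1]; simp
  rw [map_add, map_inv₀, h2, inv_inv, add_comm]

/-- If `t` has norm `±2` and `2 ∣ t ^ [K : ℚ]`, then comparing norms the cofactor is a unit,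
so `2` is totally ramified with prime `(t)`. -/
lemma span_two_eq_pow {K : Type*} [Field K] [NumberField K] (t h : 𝓞 K)
    (ht : t ^ Module.finrank ℚ K = 2 * h) (hN : Ideal.absNorm (Ideal.span {t}) = 2) :
    (Ideal.span {t}).IsPrime ∧
      Ideal.span {(2 : 𝓞 K)} = Ideal.span {t} ^ Module.finrank ℚ K := by
  refine ⟨Ideal.isPrime_of_irreducible_absNorm (by rw [hN]; exact Nat.prime_two), ?_⟩
  have h2 : Ideal.absNorm (Ideal.span {(2 : 𝓞 K)}) = 2 ^ Module.finrank ℚ K := by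
    rw [Ideal.absNorm_span_singleton, ← map_ofNat (algebraMap ℤ (𝓞 K)) 2,
      Algebra.norm_algebraMap, RingOfIntegers.rank]
    rw [Int.natAbs_pow]
    rfl
  have hI : Ideal.span {t} ^ Module.finrank ℚ K = Ideal.span {(2 : 𝓞 K)} * Ideal.span {h} := by
    rw [Ideal.span_singleton_pow, ht, Ideal.span_singleton_mul_span_singleton]
  have hh := congrArg Ideal.absNorm hI
  rw [map_pow, map_mul, hN, h2] at hh
  have h1 : Ideal.absNorm (Ideal.span {h}) = 1 := by
    refine (Nat.eq_of_mul_eq_mul_left (pow_pos two_pos (Module.finrank ℚ K)) ?_).symm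
    rw [mul_one]
    exact hh
  rw [hI, Ideal.absNorm_eq_one_iff.1 h1, Ideal.mul_top]

/-- For `n ≥ 1` the polynomial `f_n` (given by `f₁ = X² − 2`, `f_n = f_{n−1}² − 2`) is
irreducible over `ℚ`; if `θ ∈ ℂ` is any root of `f_n`, then the number field `K_n = ℚ(θ)`
equals `ℚ(ζ + ζ⁻¹)` for every primitive `2^(n+2)`-th root of unity `ζ` (the maximal totally
real subfield of the `2^(n+2)`-th cyclotomic field); `K_n` is a totally real number field of
degree `2ⁿ` over `ℚ`; and `2` is totally ramified in `K_n`, i.e. `2·𝓞 K_n = 𝔭^(2ⁿ)` for a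
single prime ideal `𝔭`. -/
theorem towerPoly_irreducible_totallyReal_two_totally_ramified (n : ℕ) (hn : 1 ≤ n) :
    Irreducible (towerPoly n) ∧
    ∀ θ : ℂ, aeval θ (towerPoly n) = 0 →
      (∀ ζ : ℂ, IsPrimitiveRoot ζ (2 ^ (n + 2)) → ℚ⟮θ⟯ = ℚ⟮ζ + ζ⁻¹⟯) ∧
      (∃ _ : FiniteDimensional ℚ ℚ⟮θ⟯, Module.finrank ℚ ℚ⟮θ⟯ = 2 ^ n) ∧
      (∀ v : InfinitePlace ℚ⟮θ⟯, v.IsReal) ∧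
      (∃ P : Ideal (𝓞 ℚ⟮θ⟯), P.IsPrime ∧
        Ideal.span {(2 : 𝓞 ℚ⟮θ⟯)} = P ^ (2 ^ n)) := by
  have hirr := towerPoly_irreducible n hn
  refine ⟨hirr, fun θ hθ => ?_⟩
  obtain ⟨hmZ, hdZ⟩ := towerInt_monic_natDegree n
  have hm : (towerPoly n).Monic := by rw [← towerInt_map]; exact hmZ.map _
  have hmin : minpoly ℚ θ = towerPoly n := (minpoly.eq_of_irreducible_of_monic hirr hθ hm).symm
  have hint : IsIntegral ℚ θ := ⟨towerPoly n, hm, hθ⟩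
  have hfd : FiniteDimensional ℚ ℚ⟮θ⟯ := adjoin.finiteDimensional hint
  have hrank : Module.finrank ℚ ℚ⟮θ⟯ = 2 ^ n := by
    rw [adjoin.finrank hint, hmin, ← towerInt_map, hmZ.natDegree_map, hdZ]
  have hnf : NumberField ℚ⟮θ⟯ := { to_charZero := inferInstance, to_finiteDimensional := hfd }
  have hgenQ : aeval (AdjoinSimple.gen ℚ θ) (towerPoly n) = 0 := by
    rw [← hmin, ← minpoly_gen ℚ θ]; exact minpoly.aeval _ _
  have hgenZ : aeval (AdjoinSimple.gen ℚ θ) (towerInt n) = 0 := by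
    rw [← aeval_map_algebraMap ℚ, towerInt_map]; exact hgenQ
  refine ⟨fun ζ hζ => ?_, ⟨hfd, hrank⟩, fun v => ?_, ?_⟩
  · obtain ⟨y, hy, rfl⟩ := exists_primitive_of_root n θ hθ
    exact le_antisymm (adjoin_le_of_primitive hy hζ) (adjoin_le_of_primitive hζ hy)
  · rw [InfinitePlace.isReal_iff, ComplexEmbedding.isReal_iff]
    -- a complex embedding sends `θ` to another root, which is real, and `θ` generates the field
    have key : (ComplexEmbedding.conjugate v.embedding).toRatAlgHom =
        v.embedding.toRatAlgHom := by
      apply adjoin_algHom_ext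
      intro x hx
      obtain rfl : x = θ := hx
      refine conj_eq_of_root n _ ?_
      change aeval (v.embedding.toRatAlgHom (AdjoinSimple.gen ℚ x)) (towerPoly n) = 0
      rw [aeval_algHom_apply, hgenQ, map_zero]
    ext x
    exact DFunLike.congr_fun key x
  · let t : 𝓞 ℚ⟮θ⟯ := ⟨AdjoinSimple.gen ℚ θ, towerInt n, hmZ, hgenZ⟩
    have htZ : aeval t (towerInt n) = 0 := by
      apply RingOfIntegers.coe_injective
      rw [← aeval_algebraMap_apply, map_zero]
      exact hgenZ
    obtain ⟨h, hh⟩ := towerInt_eq_X_pow_add n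
    have ht : t ^ Module.finrank ℚ ℚ⟮θ⟯ = 2 * -aeval t h := by
      rw [hh] at htZ
      simp only [map_add, map_mul, map_pow, aeval_X, map_ofNat] at htZ
      rw [hrank]
      linear_combination htZ
    have hN : Ideal.absNorm (Ideal.span {t}) = 2 := by
      have hnorm : Algebra.norm ℚ (AdjoinSimple.gen ℚ θ) =
          (-1) ^ (2 ^ n) * (((towerInt n).coeff 0 : ℤ) : ℚ) := by
        have := Algebra.PowerBasis.norm_gen_eq_coeff_zero_minpoly (adjoin.powerBasis hint)
        rw [adjoin.powerBasis_gen, minpoly_gen, hmin, ← PowerBasis.finrank, hrank,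
          ← towerInt_map, coeff_map] at this
        rw [eq_intCast] at this
        -- the two `ℚ`-algebra structures on `ℚ⟮θ⟯` (as a field of characteristic zero, as an
        -- intermediate field) are identified by uniqueness of such a structure
        convert this
        · rfl
        · exact Subsingleton.elim _ _
      have hZ : Algebra.norm ℤ t = (-1) ^ (2 ^ n) * (towerInt n).coeff 0 := by
        have := Algebra.coe_norm_int t
        rw [show ((t : 𝓞 ℚ⟮θ⟯) : ℚ⟮θ⟯) = AdjoinSimple.gen ℚ θ from rfl, hnorm] at this
        exact_mod_cast this
      rw [Ideal.absNorm_span_singleton, hZ, Int.natAbs_mul, Int.natAbs_pow]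
      rcases towerInt_coeff_zero n hn with h | h <;> simp [h]
    obtain ⟨hP, hram⟩ := span_two_eq_pow t _ ht hN
    exact ⟨_, hP, by rw [hram, hrank]⟩
end
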